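/- arXiv:2602.19434 — 3 statements merged into one kernel-verified Lean document; each statement's English description precedes it below -/
import Mathlib

section
/- For every finite metric space X with at least two points, c_1(EMD(X)) = c_1(TC(X)) = c_{1,lin}(TC(X)); that is, the infimal bi-Lipschitz distortion of embeddings of the metric space EMD(X) into L_1, the infimal bi-Lipschitz distortion of embeddings of the metric space TC(X) into L_1, and the infimal bi-Lipschitz distortion among all m ∈ ℕ and all linear maps TC(X) → ℓ_1^m, are all equal. -/
open MeasureTheory Finset

noncomputable section

variable (X : Type*) [Fintype X] [MetricSpace X]

/-- The transportation cost norm of a signed measure of total mass 0 on a finite metric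
space `X` (given by its point masses), via Kantorovich duality. -/
def tcNormX (μ : X → ℝ) : ℝ :=
  sSup {r : ℝ | ∃ f : X → ℝ,
    (∀ u v, |f u - f v| ≤ dist u v) ∧ r = |∑ x, f x * μ x|}

/-- The Lebesgue space `L_1(0,1)`. -/
abbrev L1Space : Type := Lp ℝ 1 (volume.restrict (Set.Ioo (0:ℝ) 1))

/-- The subspace `TC(X)` of signed measures of total mass 0, as a real vector space. -/
def TCmod : Submodule ℝ (X → ℝ) where
  carrier := {μ | ∑ x, μ x = 0}
  add_mem' := by
    intro a b ha hb
    simp only [Set.mem_setOf_eq] at *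
    simp [Finset.sum_add_distrib, ha, hb]
  zero_mem' := by simp
  smul_mem' := by
    intro c a ha
    simp only [Set.mem_setOf_eq] at *
    simp [← Finset.mul_sum, ha]

/-- `c_1(EMD(X))`: the infimal bi-Lipschitz distortion of an embedding of the metric space
of probability measures on `X` (with the earth mover distance) into `L_1(0,1)`. -/
def c1EMD : ℝ :=
  sInf {C : ℝ | ∃ F : {μ : X → ℝ // (∀ x, 0 ≤ μ x) ∧ ∑ x, μ x = 1} → L1Space,
    ∀ μ ν, tcNormX X (μ.1 - ν.1) ≤ ‖F μ - F ν‖ ∧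
      ‖F μ - F ν‖ ≤ C * tcNormX X (μ.1 - ν.1)}

/-- `c_1(TC(X))`: the infimal bi-Lipschitz distortion of an embedding of the metric space
`TC(X)` into `L_1(0,1)`. -/
def c1TC : ℝ :=
  sInf {C : ℝ | ∃ F : TCmod X → L1Space,
    ∀ μ ν : TCmod X, tcNormX X ((μ:X → ℝ) - (ν:X → ℝ)) ≤ ‖F μ - F ν‖ ∧
      ‖F μ - F ν‖ ≤ C * tcNormX X ((μ:X → ℝ) - (ν:X → ℝ))}

/-- `c_{1,lin}(TC(X))`: the infimal bi-Lipschitz distortion among all `m ∈ ℕ` and all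
linear maps `TC(X) → ℓ_1^m`. -/
def c1lin : ℝ :=
  sInf {C : ℝ | ∃ (m : ℕ) (F : TCmod X →ₗ[ℝ] PiLp 1 (fun _ : Fin m => ℝ)),
    ∀ μ ν : TCmod X, tcNormX X ((μ:X → ℝ) - (ν:X → ℝ)) ≤ ‖F μ - F ν‖ ∧
      ‖F μ - F ν‖ ≤ C * tcNormX X ((μ:X → ℝ) - (ν:X → ℝ))}

/-- `p` can be approximated by finite sums of absolute values of linear functionals. -/
def App {V : Type*} [NormedAddCommGroup V] [NormedSpace ℝ V] (p : V → ℝ) : Prop :=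
  ∀ η : ℝ, 0 < η → ∃ (ι : Type) (_ : Fintype ι) (φ : ι → V →L[ℝ] ℝ),
    ∀ v, |p v - ∑ i, ‖φ i v‖| ≤ η * ‖v‖

lemma App.of_abs {V : Type*} [NormedAddCommGroup V] [NormedSpace ℝ V] (φ : V →L[ℝ] ℝ) :
    App (fun v => ‖φ v‖) := by
  intro η hη
  refine ⟨Unit, inferInstance, fun _ => φ, fun v => ?_⟩
  simp
  positivity

lemma App.smul {V : Type*} [NormedAddCommGroup V] [NormedSpace ℝ V] {p : V → ℝ}
    (hp : App p) {a : ℝ} (ha : 0 ≤ a) : App (fun v => a * p v) := by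
  intro η hη
  obtain ⟨ι, _, φ, h⟩ := hp (η / (a + 1)) (by positivity)
  refine ⟨ι, inferInstance, fun i => a • φ i, fun v => ?_⟩
  have : a * p v - ∑ i, ‖(a • φ i) v‖ = a * (p v - ∑ i, ‖φ i v‖) := by
    simp [abs_of_nonneg ha, ← Finset.mul_sum, mul_sub]
  rw [this, abs_mul, abs_of_nonneg ha]
  calc a * |p v - ∑ i, ‖φ i v‖| ≤ (a + 1) * (η / (a + 1) * ‖v‖) := by
        gcongr
        · linarith
        · exact h v
    _ = η * ‖v‖ := by field_simp

lemma App.sum {V : Type*} [NormedAddCommGroup V] [NormedSpace ℝ V] {κ : Type*}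
    (s : Finset κ) {p : κ → V → ℝ}
    (hp : ∀ k ∈ s, App (p k)) : App (fun v => ∑ k ∈ s, p k v) := by
  classical
  induction s using Finset.induction_on with
  | empty =>
    intro η hη
    refine ⟨Empty, inferInstance, fun i => i.elim, fun v => ?_⟩
    simp
    positivity
  | insert k s hk ih =>
    intro η hη
    obtain ⟨ι, _, φ, h⟩ := hp k (by simp) (η / 2) (by positivity)
    obtain ⟨ι', _, φ', h'⟩ := ih (fun j hj => hp j (by simp [hj])) (η / 2) (by positivity)
    refine ⟨ι ⊕ ι', inferInstance, Sum.elim φ φ', fun v => ?_⟩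
    simp only [Finset.sum_insert hk, Fintype.sum_sum_type, Sum.elim_inl, Sum.elim_inr]
    have h1 := h v
    have h2 := h' v
    rw [abs_le] at *
    constructor <;> linarith

lemma App.of_approx {V : Type*} [NormedAddCommGroup V] [NormedSpace ℝ V] {p : V → ℝ}
    (h : ∀ η : ℝ, 0 < η → ∃ q : V → ℝ, App q ∧ ∀ v, |p v - q v| ≤ η * ‖v‖) : App p := by
  intro η hη
  obtain ⟨q, hq, hpq⟩ := h (η / 2) (by positivity)
  obtain ⟨ι, _, φ, h⟩ := hq (η / 2) (by positivity)
  refine ⟨ι, inferInstance, φ, fun v => ?_⟩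
  have h1 := h v
  have h2 := hpq v
  rw [abs_le] at *
  constructor <;> linarith

lemma App.integral {V Z Ω : Type*} [NormedAddCommGroup V] [NormedSpace ℝ V]
    [NormedAddCommGroup Z] [NormedSpace ℝ Z] [MeasurableSpace Ω] (μ : Measure Ω)
    (hZ : ∀ c : V →L[ℝ] Z, App (fun v => ‖c v‖))
    (A : Ω → V →L[ℝ] Z) (hA : Integrable A μ) : App (fun v => ∫ ω, ‖A ω v‖ ∂μ) := by
  apply App.of_approx
  intro η hη
  obtain ⟨S, hS, hSm⟩ := (memLp_one_iff_integrable.2 hA).exists_simpleFunc_eLpNorm_sub_lt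
    ENNReal.one_ne_top (ε := ENNReal.ofReal η) (by simpa using hη)
  have hSi : Integrable S μ := memLp_one_iff_integrable.1 hSm
  have hsub : ∫ ω, ‖A ω - S ω‖ ∂μ ≤ η := by
    have := integral_norm_eq_lintegral_enorm (hA.sub hSi).1
    simp only [Pi.sub_apply] at this
    rw [this]
    rw [eLpNorm_one_eq_lintegral_enorm] at hS
    exact ENNReal.toReal_le_of_le_ofReal hη.le hS.le
  have hev : ∀ v : V, ∀ T : Ω → V →L[ℝ] Z, Integrable T μ → Integrable (fun ω => T ω v) μ :=
    fun v T hT => (ContinuousLinearMap.apply ℝ Z v).integrable_comp hT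
  refine ⟨fun v => ∑ c ∈ S.range, μ.real (S ⁻¹' {c}) * ‖c v‖,
    App.sum _ fun c _ => (hZ c).smul (by positivity), fun v => ?_⟩
  have h1 : ∑ c ∈ S.range, μ.real (S ⁻¹' {c}) * ‖c v‖ = ∫ ω, ‖S ω v‖ ∂μ := by
    have := SimpleFunc.map_integral (μ := μ) S (fun c => ‖c v‖) hSi (by simp)
    rw [SimpleFunc.integral_eq_integral] at this
    · simpa using this.symm
    · exact (hev v S hSi).norm
  simp only [h1]
  rw [← integral_sub (hev v A hA).norm (hev v S hSi).norm]
  calc |∫ ω, ‖A ω v‖ - ‖S ω v‖ ∂μ| ≤ ∫ ω, |‖A ω v‖ - ‖S ω v‖| ∂μ := abs_integral_le_integral_abs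
    _ ≤ ∫ ω, ‖A ω - S ω‖ * ‖v‖ ∂μ := by
        apply integral_mono
        · exact ((hev v A hA).norm.sub (hev v S hSi).norm).abs
        · exact (hA.sub hSi).norm.mul_const _
        · intro ω
          calc |‖A ω v‖ - ‖S ω v‖| ≤ ‖A ω v - S ω v‖ := abs_norm_sub_norm_le _ _
            _ = ‖(A ω - S ω) v‖ := by simp
            _ ≤ _ := ContinuousLinearMap.le_opNorm _ _
    _ ≤ η * ‖v‖ := by
        rw [integral_mul_const]
        gcongr

lemma coeFn_sum_Lp {Ω κ : Type*} [MeasurableSpace Ω] {μ : Measure Ω} (s : Finset κ)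
    (f : κ → Lp ℝ 1 μ) : ⇑(∑ k ∈ s, f k) =ᵐ[μ] fun t => ∑ k ∈ s, f k t := by
  classical
  induction s using Finset.induction_on with
  | empty =>
    simp only [Finset.sum_empty]
    exact Lp.coeFn_zero _ _ _
  | insert k s hk ih =>
    rw [Finset.sum_insert hk]
    filter_upwards [Lp.coeFn_add (f k) (∑ k ∈ s, f k), ih] with t h1 h2
    rw [h1, Finset.sum_insert hk, Pi.add_apply, h2]

lemma linMap_basis_expand {V Z κ : Type*} [NormedAddCommGroup V] [NormedSpace ℝ V] [Fintype κ]
    [NormedAddCommGroup Z] [NormedSpace ℝ Z] (b : Module.Basis κ ℝ V)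
    (c : V →L[ℝ] Z) (v : V) : c v = ∑ j, b.coord j v • c (b j) := by
  have h0 := congrArg c (b.sum_repr v)
  rw [map_sum] at h0
  rw [← h0]
  exact Finset.sum_congr rfl fun j _ => map_smul c _ _

lemma integrable_sum_smul_const {Ω κ E : Type*} [MeasurableSpace Ω] {μ : Measure Ω} [Fintype κ]
    [NormedAddCommGroup E] [NormedSpace ℝ E] (f : κ → Ω → ℝ) (hf : ∀ k, Integrable (f k) μ)
    (β : κ → E) : Integrable (fun t => ∑ j, f j t • β j) μ :=
  integrable_finsetSum _ fun j _ => (hf j).smul_const _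

lemma App.of_L1 {V Ω : Type*} [NormedAddCommGroup V] [NormedSpace ℝ V]
    [FiniteDimensional ℝ V] [MeasurableSpace Ω] (μ : Measure Ω)
    (c : V →L[ℝ] Lp ℝ 1 μ) : App (fun v => ‖c v‖) := by
  let b := Module.finBasis ℝ V
  let β : Fin (Module.finrank ℝ V) → V →L[ℝ] ℝ := fun j => (b.coord j).toContinuousLinearMap
  have hβ : ∀ j v, β j v = b.repr v j := fun j v => rfl
  have hA : Integrable (fun t => ∑ j, (c (b j) t) • β j) μ :=
    integrable_sum_smul_const (fun j => ⇑(c (b j))) (fun j => L1.integrable_coeFn (c (b j))) β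
  convert App.integral μ App.of_abs _ hA using 2 with v
  rw [L1.norm_eq_integral_norm]
  apply integral_congr_ae
  have h1 : c v = ∑ j, β j v • c (b j) := by
    exact linMap_basis_expand b c v
  have h2 : ∀ᵐ t ∂μ, ∀ j, (β j v • c (b j) : Lp ℝ 1 μ) t = β j v * c (b j) t := by
    rw [ae_all_iff]
    intro j
    filter_upwards [Lp.coeFn_smul (β j v) (c (b j))] with t ht
    simpa using ht
  rw [h1]
  filter_upwards [coeFn_sum_Lp Finset.univ (fun j => β j v • c (b j)), h2] with t h3 h4
  rw [h3]
  simp [h4, mul_comm]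

lemma avg_lower {V Z : Type*} [NormedAddCommGroup V] [NormedSpace ℝ V]
    [FiniteDimensional ℝ V] [MeasurableSpace V] [BorelSpace V] [NormedAddCommGroup Z]
    [NormedSpace ℝ Z] [CompleteSpace Z] (μ : Measure V) [μ.IsAddHaarMeasure]
    (G : V → Z) (hG : ContDiff ℝ 1 G) (R m : ℝ) (v : V)
    (hm : ∀ x ∈ Metric.ball (0 : V) (R - ‖v‖), m ≤ ‖G (x + v) - G x‖) :
    μ.real (Metric.ball (0 : V) (R - ‖v‖)) * m ≤
      ∫ y in Metric.ball (0 : V) R, ‖fderiv ℝ G y v‖ ∂μ := by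
  have : ProperSpace V := FiniteDimensional.proper ℝ V
  have hdc : Continuous (fderiv ℝ G) := hG.continuous_fderiv one_ne_zero
  set h : V → ℝ := fun y => ‖fderiv ℝ G y v‖ with hh
  have hc : Continuous h := by fun_prop
  have hint : ∀ r : ℝ, IntegrableOn h (Metric.ball 0 r) μ := fun r =>
    (hc.continuousOn.integrableOn_compact (isCompact_closedBall (0 : V) r)).mono_set
      Metric.ball_subset_closedBall
  set B' := Metric.ball (0 : V) (R - ‖v‖) with hB'
  set I := Set.Ioc (0 : ℝ) 1 with hI
  have hB'fin : μ B' < ⊤ := measure_ball_lt_top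
  have hbd : Integrable (Function.uncurry fun (x : V) (s : ℝ) => h (x + s • v))
      ((μ.restrict B').prod (volume.restrict I)) := by
    rw [Measure.prod_restrict]
    have hcc : Continuous (Function.uncurry fun (x : V) (s : ℝ) => h (x + s • v)) := by
      simp only [Function.uncurry_def]
      fun_prop
    refine IntegrableOn.mono_set (t := Metric.closedBall (0 : V) (R - ‖v‖) ×ˢ Set.Icc (0 : ℝ) 1)
      ?_ (Set.prod_mono Metric.ball_subset_closedBall Set.Ioc_subset_Icc_self)
    exact hcc.continuousOn.integrableOn_compact ((isCompact_closedBall _ _).prod isCompact_Icc)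
  have hseg : ∀ x, ‖G (x + v) - G x‖ ≤ ∫ s in I, h (x + s • v) := by
    intro x
    have hd : ∀ s ∈ Set.uIcc (0 : ℝ) 1, HasDerivAt (fun s : ℝ => G (x + s • v))
        (fderiv ℝ G (x + s • v) v) s := by
      intro s _
      have h1 : HasFDerivAt G (fderiv ℝ G (x + s • v)) (x + s • v) :=
        (hG.differentiable one_ne_zero _).hasFDerivAt
      have h2 : HasDerivAt (fun s : ℝ => x + s • v) v s := by
        simpa using ((hasDerivAt_id s).smul_const v).const_add x
      exact h1.comp_hasDerivAt s h2
    have hci : Continuous fun s : ℝ => fderiv ℝ G (x + s • v) v := by fun_prop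
    have h3 := intervalIntegral.integral_eq_sub_of_hasDerivAt hd (hci.intervalIntegrable 0 1)
    simp only [one_smul, zero_smul, add_zero] at h3
    rw [← h3, intervalIntegral.integral_of_le zero_le_one]
    exact norm_integral_le_integral_norm _
  have hshift : ∀ s ∈ I, ∫ x in B', h (x + s • v) ∂μ ≤ ∫ y in Metric.ball (0 : V) R, h y ∂μ := by
    intro s hs
    have hp := measurePreserving_add_right μ (s • v)
    have he := measurableEmbedding_addRight (s • v)
    rw [← hp.setIntegral_preimage_emb he h]
    apply setIntegral_mono_set
    · exact (hp.integrableOn_comp_preimage he).2 (hint R)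
    · exact Filter.Eventually.of_forall fun x => norm_nonneg _
    · apply LE.le.eventuallyLE
      intro x hx
      simp only [hB', Metric.mem_ball, dist_zero_right, Set.mem_preimage] at hx ⊢
      have : ‖s • v‖ ≤ ‖v‖ := by
        rw [norm_smul, Real.norm_of_nonneg hs.1.le]
        exact mul_le_of_le_one_left (norm_nonneg _) hs.2
      linarith [norm_add_le x (s • v)]
  calc μ.real B' * m = ∫ x in B', m ∂μ := by simp
    _ ≤ ∫ x in B', (∫ s in I, h (x + s • v)) ∂μ := by
        apply setIntegral_mono_on
        · exact integrableOn_const hB'fin.ne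
        · exact hbd.integral_prod_left
        · exact measurableSet_ball
        · intro x hx
          exact (hm x hx).trans (hseg x)
    _ = ∫ s in I, (∫ x in B', h (x + s • v) ∂μ) := integral_integral_swap hbd
    _ ≤ ∫ s in I, (∫ y in Metric.ball (0 : V) R, h y ∂μ) := by
        apply setIntegral_mono_on
        · exact hbd.integral_prod_right
        · exact integrableOn_const (by simp [hI])
        · exact measurableSet_Ioc
        · exact hshift
    _ = _ := by simp [hI]

lemma mollify {V Z : Type*} [NormedAddCommGroup V] [NormedSpace ℝ V]
    [FiniteDimensional ℝ V] [MeasurableSpace V] [BorelSpace V] [NormedAddCommGroup Z]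
    [NormedSpace ℝ Z] [CompleteSpace Z] (μ : Measure V) [μ.IsAddHaarMeasure]
    (F : V → Z) (hF : Continuous F) (r ε C : ℝ) (hC : 0 ≤ C) (hε : 0 < ε)
    (hL : ∀ x ∈ Metric.closedBall (0 : V) r, ∀ y ∈ Metric.closedBall (0 : V) r,
      ‖F x - F y‖ ≤ C * ‖x - y‖) :
    ∃ G : V → Z, ContDiff ℝ 1 G ∧ (∀ x ∈ Metric.ball (0 : V) (r - ε), ‖G x - F x‖ ≤ C * ε) ∧
      ∀ x ∈ Metric.ball (0 : V) (r - ε), ∀ y ∈ Metric.ball (0 : V) (r - ε),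
        ‖G x - G y‖ ≤ C * ‖x - y‖ := by
  have : ProperSpace V := FiniteDimensional.proper ℝ V
  let φ : ContDiffBump (0 : V) := ⟨ε / 2, ε, by positivity, by linarith⟩
  have hφ : φ.rOut = ε := rfl
  have hFl : LocallyIntegrable F μ := hF.locallyIntegrable
  refine ⟨convolution (φ.normed μ) F (ContinuousLinearMap.lsmul ℝ ℝ) μ, ?_, ?_, ?_⟩
  · exact φ.hasCompactSupport_normed.contDiff_convolution_left _ φ.contDiff_normed hFl
  · intro x hx
    rw [← dist_eq_norm]
    apply φ.dist_normed_convolution_le hF.aestronglyMeasurable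
    intro z hz
    rw [hφ] at hz
    simp only [Metric.mem_ball, dist_zero_right] at hx hz
    rw [dist_eq_norm] at hz ⊢
    have hzn : ‖z‖ ≤ ‖z - x‖ + ‖x‖ := by simpa using norm_add_le (z - x) x
    refine (hL z (by simp; linarith) x (by simp; linarith)).trans ?_
    gcongr
  · intro x hx y hy
    simp only [Metric.mem_ball, dist_zero_right] at hx hy
    have hi : ∀ x, Integrable (fun t => φ.normed μ t • F (x - t)) μ := by
      intro x
      apply Continuous.integrable_of_hasCompactSupport
      · exact φ.continuous_normed.smul (by fun_prop)
      · exact φ.hasCompactSupport_normed.smul_right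
    rw [convolution_def, convolution_def]
    simp only [ContinuousLinearMap.lsmul_apply]
    rw [← integral_sub (hi x) (hi y)]
    calc ‖∫ t, φ.normed μ t • F (x - t) - φ.normed μ t • F (y - t) ∂μ‖
        ≤ ∫ t, φ.normed μ t * (C * ‖x - y‖) ∂μ := by
          apply norm_integral_le_of_norm_le
          · exact φ.integrable_normed.mul_const _
          · refine Filter.Eventually.of_forall fun t => ?_
            rw [← smul_sub, norm_smul, Real.norm_of_nonneg (φ.nonneg_normed t)]
            by_cases ht : t ∈ Metric.ball (0 : V) ε
            · apply mul_le_mul_of_nonneg_left _ (φ.nonneg_normed t)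
              simp only [Metric.mem_ball, dist_zero_right] at ht
              have h1 := norm_sub_le x t
              have h2 := norm_sub_le y t
              have := hL (x - t) (by simp; linarith) (y - t) (by simp; linarith)
              simpa using this
            · have : φ.normed μ t = 0 := by
                by_contra hne
                apply ht
                have := φ.support_normed_eq (μ := μ)
                rw [← hφ, ← this]
                exact hne
              simp [this]
      _ = C * ‖x - y‖ := by
          rw [integral_mul_const, φ.integral_normed, one_mul]

lemma core_step {V Z : Type*} [NormedAddCommGroup V] [NormedSpace ℝ V]
    [FiniteDimensional ℝ V] [NormedAddCommGroup Z]
    [NormedSpace ℝ Z] [CompleteSpace Z]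
    (hZ : ∀ c : V →L[ℝ] Z, App (fun v => ‖c v‖))
    (F : V → Z) (hF : Continuous F) (r C : ℝ) (hC : 0 ≤ C) (hr : 0 < r)
    (hL : ∀ x ∈ Metric.closedBall (0 : V) r, ∀ y ∈ Metric.closedBall (0 : V) r,
      ‖x - y‖ ≤ ‖F x - F y‖ ∧ ‖F x - F y‖ ≤ C * ‖x - y‖)
    (κ : ℝ) (hκ : 0 < κ) (hκ1 : κ < 1 / 4) :
    ∃ p : V → ℝ, App p ∧ (∀ v, p v ≤ C * ‖v‖) ∧
      ∀ v, (((1 - κ ^ 2 - κ) / (1 - κ ^ 2)) ^ (Module.finrank ℝ V) * (1 - 2 * C * κ)) * ‖v‖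
        ≤ p v := by
  have : ProperSpace V := FiniteDimensional.proper ℝ V
  let _ : MeasurableSpace V := borel V
  have : BorelSpace V := ⟨rfl⟩
  let μ : Measure V := Measure.addHaar
  obtain ⟨G, hG, hGF, hGL⟩ := mollify μ F hF r (κ ^ 2 * r) C hC (by positivity)
    (fun x hx y hy => (hL x hx y hy).2)
  have hdc : Continuous (fderiv ℝ G) := hG.continuous_fderiv one_ne_zero
  set R := r - κ ^ 2 * r with hR
  have hRpos : 0 < R := by
    have : κ ^ 2 < 1 := by nlinarith
    nlinarith
  set δ := κ * r with hδ
  have hδpos : 0 < δ := by positivity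
  have hRδ : 0 < R - δ := by
    have : κ ^ 2 < 1 / 4 := by nlinarith
    nlinarith
  have hderiv : ∀ y ∈ Metric.ball (0 : V) R, ‖fderiv ℝ G y‖ ≤ C := by
    intro y hy
    apply norm_fderiv_le_of_lip' ℝ hC
    filter_upwards [Metric.isOpen_ball.mem_nhds hy] with x hx
    exact hGL x hx y hy
  have hi : IntegrableOn (fderiv ℝ G) (Metric.ball 0 R) μ :=
    (hdc.continuousOn.integrableOn_compact (isCompact_closedBall (0 : V) R)).mono_set
      Metric.ball_subset_closedBall
  have hball : ∀ s : ℝ, 0 < s → μ.real (Metric.ball (0 : V) s)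
      = s ^ Module.finrank ℝ V * μ.real (Metric.ball (0 : V) 1) := by
    intro s hs
    rw [measureReal_def, Measure.addHaar_ball_of_pos μ 0 hs, ENNReal.toReal_mul,
      ENNReal.toReal_ofReal (by positivity), ← measureReal_def]
  have hb1 : 0 < μ.real (Metric.ball (0 : V) 1) :=
    ENNReal.toReal_pos (Metric.measure_ball_pos μ 0 one_pos).ne' measure_ball_lt_top.ne
  have hbR : 0 < μ.real (Metric.ball (0 : V) R) := by
    rw [hball R hRpos]; positivity
  refine ⟨fun v => (μ.real (Metric.ball (0 : V) R))⁻¹ *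
    ∫ y in Metric.ball (0 : V) R, ‖fderiv ℝ G y v‖ ∂μ, ?_, ?_, ?_⟩
  · exact (App.integral (μ.restrict (Metric.ball 0 R)) hZ _ hi).smul (by positivity)
  · intro v
    have : ∫ y in Metric.ball (0 : V) R, ‖fderiv ℝ G y v‖ ∂μ
        ≤ ∫ y in Metric.ball (0 : V) R, C * ‖v‖ ∂μ := by
      apply setIntegral_mono_on
      · exact ((ContinuousLinearMap.apply ℝ Z v).integrable_comp hi).norm
      · exact integrableOn_const measure_ball_lt_top.ne
      · exact measurableSet_ball
      · intro y hy
        exact ((fderiv ℝ G y).le_opNorm v).trans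
          (mul_le_mul_of_nonneg_right (hderiv y hy) (norm_nonneg _))
    simp only [setIntegral_const, smul_eq_mul] at this
    rwa [inv_mul_le_iff₀ hbR]
  · intro v
    by_cases hv : v = 0
    · simp [hv]
    have hvn : 0 < ‖v‖ := norm_pos_iff.2 hv
    set w := (δ / ‖v‖) • v with hw
    have hwn : ‖w‖ = δ := by
      rw [hw, norm_smul, Real.norm_of_nonneg (by positivity)]
      field_simp
    have key := avg_lower μ G hG R (δ - 2 * C * (κ ^ 2 * r)) w (by
      intro x hx
      rw [hwn] at hx
      simp only [Metric.mem_ball, dist_zero_right] at hx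
      have hxw : ‖x + w‖ < R := by linarith [norm_add_le x w]
      have hRr : R ≤ r := by
        have : 0 ≤ κ ^ 2 * r := by positivity
        linarith
      have h1 := hGF x (by simp; linarith)
      have h2 := hGF (x + w) (by simpa using hxw)
      have h3 := (hL (x + w) (by simp; linarith) x (by simp; linarith)).1
      simp only [add_sub_cancel_left, hwn] at h3
      have h4 : F (x + w) - F x = (G (x + w) - G x) - (G (x + w) - F (x + w)) + (G x - F x) := by
        abel
      rw [h4] at h3
      have h5 := norm_add_le ((G (x + w) - G x) - (G (x + w) - F (x + w))) (G x - F x)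
      have h6 := norm_sub_le (G (x + w) - G x) (G (x + w) - F (x + w))
      linarith)
    have hs : ∫ y in Metric.ball (0 : V) R, ‖fderiv ℝ G y w‖ ∂μ
        = (δ / ‖v‖) * ∫ y in Metric.ball (0 : V) R, ‖fderiv ℝ G y v‖ ∂μ := by
      rw [← integral_const_mul]
      congr 1
      ext y
      rw [hw, map_smul, norm_smul, Real.norm_of_nonneg (by positivity)]
    rw [hs, hwn, hball _ hRδ] at key
    beta_reduce
    rw [hball R hRpos, ← div_eq_inv_mul, le_div_iff₀ (by positivity)]
    have e1 : (1 - κ ^ 2 - κ) / (1 - κ ^ 2) = (R - δ) / R := by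
      rw [hR, hδ]
      have : (1 - κ ^ 2) ≠ 0 := by nlinarith
      have h2 : r - κ ^ 2 * r ≠ 0 := by rw [← hR]; exact hRpos.ne'
      field_simp
    rw [e1, div_pow]
    have e2 : δ - 2 * C * (κ ^ 2 * r) = δ * (1 - 2 * C * κ) := by rw [hδ]; ring
    rw [e2] at key
    have hRn : R ^ Module.finrank ℝ V ≠ 0 := by positivity
    calc _ = (‖v‖ / δ) * ((R - δ) ^ Module.finrank ℝ V * μ.real (Metric.ball (0 : V) 1)
            * (δ * (1 - 2 * C * κ))) := by field_simp
      _ ≤ (‖v‖ / δ) * (δ / ‖v‖ * ∫ y in Metric.ball (0 : V) R, ‖fderiv ℝ G y v‖ ∂μ) := by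
          gcongr
      _ = _ := by field_simp

theorem core {V Z : Type*} [NormedAddCommGroup V] [NormedSpace ℝ V]
    [FiniteDimensional ℝ V] [NormedAddCommGroup Z]
    [NormedSpace ℝ Z] [CompleteSpace Z]
    (hZ : ∀ c : V →L[ℝ] Z, App (fun v => ‖c v‖))
    (F : V → Z) (r C : ℝ) (hC : 0 ≤ C) (hr : 0 < r)
    (hL : ∀ x ∈ Metric.closedBall (0 : V) r, ∀ y ∈ Metric.closedBall (0 : V) r,
      ‖x - y‖ ≤ ‖F x - F y‖ ∧ ‖F x - F y‖ ≤ C * ‖x - y‖)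
    (η : ℝ) (hη : 0 < η) :
    ∃ (m : ℕ) (φ : Fin m → V →L[ℝ] ℝ), ∀ v, (1 - η) * ‖v‖ ≤ ∑ i, ‖φ i v‖ ∧
      ∑ i, ‖φ i v‖ ≤ (C + η) * ‖v‖ := by
  -- continuous extension by radial retraction
  let ρ : V → V := fun x => (r / max r ‖x‖) • x
  have hmax : ∀ x : V, 0 < max r ‖x‖ := fun x => lt_max_of_lt_left hr
  have hρc : Continuous ρ :=
    (continuous_const.div (continuous_const.max continuous_norm) fun x => (hmax x).ne').smul
      continuous_id
  have hρm : ∀ x, ρ x ∈ Metric.closedBall (0 : V) r := by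
    intro x
    simp only [ρ, Metric.mem_closedBall, dist_zero_right]
    rw [norm_smul, Real.norm_of_nonneg (div_nonneg hr.le (hmax x).le), div_mul_eq_mul_div,
      div_le_iff₀ (hmax x)]
    gcongr
    exact le_max_right _ _
  have hρi : ∀ x ∈ Metric.closedBall (0 : V) r, ρ x = x := by
    intro x hx
    simp only [Metric.mem_closedBall, dist_zero_right] at hx
    simp [ρ, max_eq_left hx, div_self hr.ne']
  have hFc : Continuous (F ∘ ρ) := by
    have hlip : LipschitzOnWith C.toNNReal F (Metric.closedBall (0 : V) r) :=
      LipschitzOnWith.of_dist_le_mul fun x hx y hy => by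
        rw [dist_eq_norm, dist_eq_norm, Real.coe_toNNReal _ hC]
        exact (hL x hx y hy).2
    exact hlip.continuousOn.comp_continuous hρc hρm
  have hL' : ∀ x ∈ Metric.closedBall (0 : V) r, ∀ y ∈ Metric.closedBall (0 : V) r,
      ‖x - y‖ ≤ ‖(F ∘ ρ) x - (F ∘ ρ) y‖ ∧ ‖(F ∘ ρ) x - (F ∘ ρ) y‖ ≤ C * ‖x - y‖ := by
    intro x hx y hy
    simp only [Function.comp, hρi x hx, hρi y hy]
    exact hL x hx y hy
  -- choice of the scale
  have hlim : Filter.Tendsto (fun κ : ℝ =>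
      ((1 - κ ^ 2 - κ) / (1 - κ ^ 2)) ^ (Module.finrank ℝ V) * (1 - 2 * C * κ))
      (nhds 0) (nhds 1) := by
    have : ContinuousAt (fun κ : ℝ =>
      ((1 - κ ^ 2 - κ) / (1 - κ ^ 2)) ^ (Module.finrank ℝ V) * (1 - 2 * C * κ)) 0 := by
      refine ContinuousAt.mul (ContinuousAt.pow (ContinuousAt.div ?_ ?_ ?_) _) ?_
      · fun_prop
      · fun_prop
      · norm_num
      · fun_prop
    simpa [ContinuousAt] using this
  have hev : ∀ᶠ κ : ℝ in nhdsWithin 0 (Set.Ioi 0), (0 < κ ∧ κ < 1 / 4) ∧ 1 - η / 2 <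
      ((1 - κ ^ 2 - κ) / (1 - κ ^ 2)) ^ (Module.finrank ℝ V) * (1 - 2 * C * κ) := by
    refine Filter.Eventually.and ?_ ?_
    · exact Ioo_mem_nhdsGT (by norm_num)
    · exact (hlim.eventually (lt_mem_nhds (by linarith))).filter_mono nhdsWithin_le_nhds
  obtain ⟨κ, ⟨hκ, hκ1⟩, hκ2⟩ := hev.exists
  obtain ⟨p, hp, hpu, hpl⟩ := core_step hZ (F ∘ ρ) hFc r C hC hr hL' κ hκ hκ1
  obtain ⟨ι, _, φ, hφ⟩ := hp (η / 2) (by positivity)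
  refine ⟨Fintype.card ι, fun i => φ ((Fintype.equivFin ι).symm i), fun v => ?_⟩
  rw [Equiv.sum_comp (Fintype.equivFin ι).symm (fun i => ‖φ i v‖)]
  have h1 := hφ v
  have h2 := hpu v
  have h3 := hpl v
  have h4 := mul_le_mul_of_nonneg_right hκ2.le (norm_nonneg v)
  have h5 := norm_nonneg v
  rw [abs_le] at h1
  constructor <;> nlinarith

lemma l1_embed (m : ℕ) : ∃ J : PiLp 1 (fun _ : Fin m => ℝ) → L1Space,
    ∀ a b, ‖J a - J b‖ = ‖a - b‖ := by
  let f : ℕ → ℝ := fun n => 1 - 1 / ((n : ℝ) + 1)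
  have hf : Monotone f := by
    intro a b hab
    simp only [f]
    have : (a : ℝ) ≤ b := by exact_mod_cast hab
    gcongr
  have hdisj := hf.pairwise_disjoint_on_Ioc_succ
  simp only [Nat.succ_eq_succ, Nat.succ_eq_add_one] at hdisj
  have hlt : ∀ n, 0 < f (n + 1) - f n := by
    intro n
    simp only [f]
    have : 1 / (((n + 1 : ℕ) : ℝ) + 1) < 1 / ((n : ℝ) + 1) := by
      apply one_div_lt_one_div_of_lt
      · positivity
      · push_cast; linarith
    linarith
  have hsub : ∀ n, Set.Ioc (f n) (f (n + 1)) ⊆ Set.Ioo (0 : ℝ) 1 := by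
    intro n x hx
    have h0 : 0 ≤ f n := by
      have := hf (Nat.zero_le n)
      simpa [f] using this
    have h1 : f (n + 1) < 1 := by
      simp only [f]
      have : 0 < 1 / (((n + 1 : ℕ) : ℝ) + 1) := by positivity
      linarith
    exact ⟨lt_of_le_of_lt h0 hx.1, lt_of_le_of_lt hx.2 h1⟩
  let ν : Measure ℝ := volume.restrict (Set.Ioo (0 : ℝ) 1)
  let g : ℕ → ℝ → ℝ := fun n => (Set.Ioc (f n) (f (n + 1))).indicator
    fun _ => (f (n + 1) - f n)⁻¹
  have hg0 : ∀ n t, 0 ≤ g n t := fun n t =>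
    Set.indicator_nonneg (fun _ _ => (inv_pos.2 (hlt n)).le) t
  have hgi : ∀ n, Integrable (g n) ν := by
    intro n
    exact (integrable_const _).indicator measurableSet_Ioc
  have hg1 : ∀ n, ∫ t, g n t ∂ν = 1 := by
    intro n
    simp only [g, ν]
    rw [integral_indicator_const _ measurableSet_Ioc, measureReal_restrict_apply measurableSet_Ioc,
      Set.inter_eq_left.2 (hsub n), Real.volume_real_Ioc_of_le (by linarith [hlt n])]
    exact mul_inv_cancel₀ (hlt n).ne'
  have hsumi : ∀ a : Fin m → ℝ, Integrable (fun t => ∑ i : Fin m, a i * g i t) ν := fun a =>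
    integrable_finsetSum _ fun i _ => (hgi i).const_mul _
  have hnorm : ∀ (a : Fin m → ℝ) (t : ℝ), ‖∑ i : Fin m, a i * g i t‖ = ∑ i : Fin m, |a i| * g i t := by
    intro a t
    by_cases h : ∃ k : Fin m, t ∈ Set.Ioc (f k) (f (k + 1))
    · obtain ⟨k, hk⟩ := h
      have hz : ∀ i : Fin m, i ≠ k → g i t = 0 := by
        intro i hik
        apply Set.indicator_of_notMem
        intro hi
        exact Set.disjoint_left.1 (hdisj (fun h => hik (Fin.ext h))) hi hk
      rw [Finset.sum_eq_single k (fun i _ hi => by simp [hz i hi]) (by simp),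
        Finset.sum_eq_single k (fun i _ hi => by simp [hz i hi]) (by simp), norm_mul,
        Real.norm_of_nonneg (hg0 _ _), Real.norm_eq_abs]
    · push Not at h
      have hz : ∀ i : Fin m, g i t = 0 := fun i => Set.indicator_of_notMem (h i) _
      simp [hz]
  refine ⟨fun a => (hsumi a).toL1 _, fun a b => ?_⟩
  rw [← Integrable.toL1_sub, L1.norm_eq_integral_norm]
  have h1 : ∫ t, ‖((hsumi a).sub (hsumi b)).toL1 _ t‖ ∂ν
      = ∫ t, ∑ i : Fin m, |a i - b i| * g i t ∂ν := by
    apply integral_congr_ae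
    filter_upwards [((hsumi a).sub (hsumi b)).coeFn_toL1] with t ht
    rw [ht, ← hnorm]
    simp [sub_mul]
  refine h1.trans ?_
  have h2 := integral_finsetSum (μ := ν) (Finset.univ : Finset (Fin m))
    (f := fun i t => |a i - b i| * g i t) fun i _ => (hgi i).const_mul _
  refine h2.trans ?_
  simp only [integral_const_mul, hg1, mul_one]
  rw [PiLp.norm_eq_of_L1]
  simp

section TC

variable {X}

lemma tcSet_bdd (μ : X → ℝ) (hμ : ∑ x, μ x = 0) :
    BddAbove {r : ℝ | ∃ f : X → ℝ,
      (∀ u v, |f u - f v| ≤ dist u v) ∧ r = |∑ x, f x * μ x|} := by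
  rcases isEmpty_or_nonempty X with h | ⟨⟨x0⟩⟩
  · refine ⟨0, ?_⟩
    rintro r ⟨f, -, rfl⟩
    simp
  refine ⟨∑ x, dist x x0 * |μ x|, ?_⟩
  rintro r ⟨f, hf, rfl⟩
  have : ∑ x, f x * μ x = ∑ x, (f x - f x0) * μ x := by
    simp [sub_mul, Finset.sum_sub_distrib, ← Finset.mul_sum, hμ]
  rw [this]
  refine (Finset.abs_sum_le_sum_abs _ _).trans (Finset.sum_le_sum fun x _ => ?_)
  rw [abs_mul]
  exact mul_le_mul_of_nonneg_right (hf x x0) (abs_nonneg _)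

lemma le_tcNorm (μ : X → ℝ) (hμ : ∑ x, μ x = 0) (f : X → ℝ)
    (hf : ∀ u v, |f u - f v| ≤ dist u v) : |∑ x, f x * μ x| ≤ tcNormX X μ :=
  le_csSup (tcSet_bdd μ hμ) ⟨f, hf, rfl⟩

lemma tcNorm_le (μ : X → ℝ) (K : ℝ) (h : ∀ f : X → ℝ, (∀ u v, |f u - f v| ≤ dist u v) →
    |∑ x, f x * μ x| ≤ K) : tcNormX X μ ≤ K := by
  refine csSup_le ⟨_, ⟨0, by simp, rfl⟩⟩ ?_
  rintro r ⟨f, hf, rfl⟩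
  exact h f hf

lemma tcNorm_nonneg (μ : X → ℝ) : 0 ≤ tcNormX X μ := by
  apply Real.sSup_nonneg
  rintro r ⟨f, hf, rfl⟩
  positivity

lemma tcNorm_smul_le (c : ℝ) (μ : X → ℝ) (hμ : ∑ x, μ x = 0) :
    tcNormX X (c • μ) ≤ |c| * tcNormX X μ := by
  apply tcNorm_le
  intro f hf
  have : ∑ x, f x * (c • μ) x = c * ∑ x, f x * μ x := by
    rw [Finset.mul_sum]
    refine Finset.sum_congr rfl fun x _ => ?_
    simp; ring
  rw [this, abs_mul]
  gcongr
  exact le_tcNorm μ hμ f hf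

lemma tcNorm_smul (c : ℝ) (μ : X → ℝ) (hμ : ∑ x, μ x = 0) :
    tcNormX X (c • μ) = |c| * tcNormX X μ := by
  apply le_antisymm (tcNorm_smul_le c μ hμ)
  by_cases hc : c = 0
  · subst hc
    simpa using tcNorm_nonneg _
  have h := tcNorm_smul_le c⁻¹ (c • μ) (by simp [← Finset.mul_sum, hμ])
  rw [inv_smul_smul₀ hc, abs_inv] at h
  rwa [← le_inv_mul_iff₀ (abs_pos.2 hc)]

lemma tcNorm_eq_zero (μ : X → ℝ) (hμ : ∑ x, μ x = 0) (h : tcNormX X μ = 0) : μ = 0 := by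
  classical
  ext x
  obtain ⟨ε, hε, hball⟩ : ∃ ε > 0, ∀ y, y ≠ x → ε ≤ dist y x := by
    obtain ⟨ε, hε, hb⟩ := Metric.isOpen_iff.1 (isOpen_discrete ({x} : Set X)) x rfl
    refine ⟨ε, hε, fun y hy => ?_⟩
    by_contra hlt
    exact hy (hb (by simpa using hlt))
  have h1 := le_tcNorm μ hμ (fun u => if u = x then ε else 0) (by
    intro u v
    by_cases hu : u = x <;> by_cases hv : v = x
    · simp [hu, hv]
    · subst hu
      simpa [hv, abs_of_pos hε, dist_comm] using hball v hv
    · subst hv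
      simpa [hu, abs_of_pos hε] using hball u hu
    · simp [hu, hv])
  rw [h] at h1
  have h2 : ε * μ x = 0 := by
    have h3 := abs_nonpos_iff.1 h1
    simpa only [ite_mul, zero_mul, Finset.sum_ite_eq', Finset.mem_univ, if_true] using h3
  simpa [hε.ne'] using h2

end TC

/-- `TC(X)` as a type synonym that carries the transportation cost norm. -/
def TCn : Type _ := TCmod X

instance : AddCommGroup (TCn X) := inferInstanceAs (AddCommGroup (TCmod X))
instance : Module ℝ (TCn X) := inferInstanceAs (Module ℝ (TCmod X))
instance : FiniteDimensional ℝ (TCn X) := inferInstanceAs (FiniteDimensional ℝ (TCmod X))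

/-- The linear identification of `TC(X)` with its normed synonym. -/
def toTCn : TCmod X ≃ₗ[ℝ] TCn X := LinearEquiv.refl ℝ (TCmod X)

instance : Norm (TCn X) := ⟨fun v => tcNormX X ((toTCn X).symm v : X → ℝ)⟩

lemma TCn_norm_def (v : TCn X) : ‖v‖ = tcNormX X ((toTCn X).symm v : X → ℝ) := rfl

lemma TCn_core : NormedSpace.Core ℝ (TCn X) where
  norm_nonneg v := tcNorm_nonneg _
  norm_smul c v := by
    rw [TCn_norm_def, TCn_norm_def, map_smul]
    exact tcNorm_smul c _ ((toTCn X).symm v).2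
  norm_triangle v w := by
    rw [TCn_norm_def, TCn_norm_def, TCn_norm_def, map_add]
    apply tcNorm_le
    intro f hf
    have h1 := le_tcNorm _ ((toTCn X).symm v).2 f hf
    have h2 := le_tcNorm _ ((toTCn X).symm w).2 f hf
    have : ∑ x, f x * (((toTCn X).symm v + (toTCn X).symm w : TCmod X) : X → ℝ) x
        = ∑ x, f x * ((toTCn X).symm v : X → ℝ) x + ∑ x, f x * ((toTCn X).symm w : X → ℝ) x := by
      simp [mul_add, Finset.sum_add_distrib]
    rw [this]
    exact (abs_add_le _ _).trans (add_le_add h1 h2)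
  norm_eq_zero_iff v := by
    constructor
    · intro h
      have := tcNorm_eq_zero _ ((toTCn X).symm v).2 h
      have h2 : (toTCn X).symm v = 0 := Subtype.ext this
      simpa using h2
    · rintro rfl
      rw [TCn_norm_def, map_zero]
      have := tcNorm_smul 0 (0 : X → ℝ) (by simp)
      simpa using this

instance : NormedAddCommGroup (TCn X) := NormedAddCommGroup.ofCore (TCn_core X)
instance : NormedSpace ℝ (TCn X) := NormedSpace.ofCore (TCn_core X)

lemma TCn_norm (v : TCmod X) : ‖toTCn X v‖ = tcNormX X (v : X → ℝ) := rfl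

lemma TCn_norm_sub (v w : TCmod X) :
    ‖toTCn X v - toTCn X w‖ = tcNormX X ((v : X → ℝ) - (w : X → ℝ)) := by
  rw [← map_sub]; rfl

lemma unif_sum [Nontrivial X] : ∑ _x : X, (1 / (Fintype.card X : ℝ)) = 1 := by
  have : (Fintype.card X : ℝ) ≠ 0 := by exact_mod_cast Fintype.card_ne_zero
  simp [this]

lemma emd_nonneg [Nontrivial X] (C : ℝ)
    (F : {μ : X → ℝ // (∀ x, 0 ≤ μ x) ∧ ∑ x, μ x = 1} → L1Space)
    (hF : ∀ μ ν, tcNormX X (μ.1 - ν.1) ≤ ‖F μ - F ν‖ ∧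
      ‖F μ - F ν‖ ≤ C * tcNormX X (μ.1 - ν.1)) : 0 ≤ C := by
  classical
  obtain ⟨a, b, hab⟩ := exists_pair_ne X
  let P : X → {μ : X → ℝ // (∀ x, 0 ≤ μ x) ∧ ∑ x, μ x = 1} := fun a =>
    ⟨fun x => if x = a then 1 else 0, fun x => by positivity, by simp⟩
  have h := hF (P a) (P b)
  have hpos : 0 < tcNormX X ((P a).1 - (P b).1) := by
    apply lt_of_le_of_ne (tcNorm_nonneg _)
    intro h0
    have h1 := tcNorm_eq_zero _ (by simp [Finset.sum_sub_distrib, (P a).2.2, (P b).2.2]) h0.symm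
    have h2 := congrFun h1 a
    simp [P, hab] at h2
  by_contra hC
  push Not at hC
  nlinarith [h.1, h.2]

lemma main_step [Nontrivial X] (C : ℝ)
    (F : {μ : X → ℝ // (∀ x, 0 ≤ μ x) ∧ ∑ x, μ x = 1} → L1Space)
    (hF : ∀ μ ν, tcNormX X (μ.1 - ν.1) ≤ ‖F μ - F ν‖ ∧
      ‖F μ - F ν‖ ≤ C * tcNormX X (μ.1 - ν.1)) (ε : ℝ) (hε : 0 < ε) :
    ∃ (m : ℕ) (F : TCmod X →ₗ[ℝ] PiLp 1 (fun _ : Fin m => ℝ)),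
    ∀ μ ν : TCmod X, tcNormX X ((μ:X → ℝ) - (ν:X → ℝ)) ≤ ‖F μ - F ν‖ ∧
      ‖F μ - F ν‖ ≤ (C + ε) * tcNormX X ((μ:X → ℝ) - (ν:X → ℝ)) := by
  classical
  have hC : 0 ≤ C := emd_nonneg X C F hF
  have hn : (0 : ℝ) < Fintype.card X := by exact_mod_cast Fintype.card_pos
  -- the inclusion is bounded
  let L : TCn X →L[ℝ] (X → ℝ) :=
    ((TCmod X).subtype ∘ₗ (toTCn X).symm.toLinearMap).toContinuousLinearMap
  have hLv : ∀ v, L v = ((toTCn X).symm v : X → ℝ) := fun v => rfl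
  let r : ℝ := 1 / (Fintype.card X * (‖L‖ + 1))
  have hr : 0 < r := by positivity
  have hcoord : ∀ v ∈ Metric.closedBall (0 : TCn X) r, ∀ x,
      0 ≤ 1 / (Fintype.card X : ℝ) + L v x := by
    intro v hv x
    simp only [Metric.mem_closedBall, dist_zero_right] at hv
    have h1 : |L v x| ≤ ‖L‖ * ‖v‖ := (norm_le_pi_norm (L v) x).trans (L.le_opNorm v)
    have h2 : ‖L‖ * ‖v‖ ≤ (‖L‖ + 1) * r := by
      gcongr
      linarith
    have h3 : (‖L‖ + 1) * r = 1 / (Fintype.card X : ℝ) := by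
      simp only [r]
      have := norm_nonneg L
      field_simp
    have h4 := neg_abs_le (L v x)
    linarith
  have hsum : ∀ v, ∑ x, (1 / (Fintype.card X : ℝ) + L v x) = 1 := by
    intro v
    rw [Finset.sum_add_distrib, unif_sum, hLv]
    have : ∑ x, ((toTCn X).symm v : X → ℝ) x = 0 := ((toTCn X).symm v).2
    rw [this, add_zero]
  let F' : TCn X → L1Space := fun v =>
    if h : ∀ x, 0 ≤ 1 / (Fintype.card X : ℝ) + L v x then
      F ⟨fun x => 1 / (Fintype.card X : ℝ) + L v x, h, hsum v⟩ else 0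
  have hF' : ∀ v ∈ Metric.closedBall (0 : TCn X) r, ∀ w ∈ Metric.closedBall (0 : TCn X) r,
      ‖v - w‖ ≤ ‖F' v - F' w‖ ∧ ‖F' v - F' w‖ ≤ C * ‖v - w‖ := by
    intro v hv w hw
    simp only [F', dif_pos (hcoord v hv), dif_pos (hcoord w hw)]
    have h := hF ⟨fun x => 1 / (Fintype.card X : ℝ) + L v x, hcoord v hv, hsum v⟩
      ⟨fun x => 1 / (Fintype.card X : ℝ) + L w x, hcoord w hw, hsum w⟩
    have e : ‖v - w‖ = tcNormX X ((fun x => 1 / (Fintype.card X : ℝ) + L v x)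
        - (fun x => 1 / (Fintype.card X : ℝ) + L w x)) := by
      have e1 : ((fun x => 1 / (Fintype.card X : ℝ) + L v x)
        - (fun x => 1 / (Fintype.card X : ℝ) + L w x)) = L (v - w) := by
        ext x
        simp
      rw [e1, hLv, TCn_norm_def]
    rw [e]
    exact h
  have hCε : 0 < 1 + C + ε := by positivity
  let η : ℝ := ε / (1 + C + ε)
  have hη : 0 < η := by positivity
  have hη1 : 0 < 1 - η := by
    have : η < 1 := by
      simp only [η]
      rw [div_lt_one hCε]
      linarith
    linarith
  have hηeq : C + η = (C + ε) * (1 - η) := by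
    simp only [η]
    field_simp
    ring
  obtain ⟨m, φ, hφ⟩ := core (fun c => App.of_L1 _ c) F' r C hC hr hF' η hη
  let T : TCmod X →ₗ[ℝ] (Fin m → ℝ) :=
    LinearMap.pi fun i => (1 - η)⁻¹ • ((φ i).toLinearMap ∘ₗ (toTCn X).toLinearMap)
  refine ⟨m, (WithLp.linearEquiv 1 ℝ (Fin m → ℝ)).symm.toLinearMap ∘ₗ T, fun μ ν => ?_⟩
  have hnorm : ∀ v : TCmod X,
      ‖((WithLp.linearEquiv 1 ℝ (Fin m → ℝ)).symm.toLinearMap ∘ₗ T) v‖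
        = (1 - η)⁻¹ * ∑ i, ‖φ i (toTCn X v)‖ := by
    intro v
    rw [PiLp.norm_eq_of_L1, Finset.mul_sum]
    refine Finset.sum_congr rfl fun i _ => ?_
    have : (((WithLp.linearEquiv 1 ℝ (Fin m → ℝ)).symm.toLinearMap ∘ₗ T) v) i
      = (1 - η)⁻¹ * φ i (toTCn X v) := rfl
    rw [this, norm_mul, Real.norm_of_nonneg (inv_pos.2 hη1).le]
  rw [← map_sub, hnorm, ← TCn_norm_sub, ← map_sub]
  obtain ⟨h1, h2⟩ := hφ (toTCn X (μ - ν))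
  rw [hηeq] at h2
  constructor
  · rwa [le_inv_mul_iff₀ hη1]
  · rw [inv_mul_le_iff₀ hη1]
    linarith

/-- For every finite metric space `X` with at least two points,
`c_1(EMD(X)) = c_1(TC(X)) = c_{1,lin}(TC(X))`. -/
theorem c1_emd_eq_c1_tc_eq_c1_lin [Nontrivial X] :
    c1EMD X = c1TC X ∧ c1TC X = c1lin X := by
  set SE := {C : ℝ | ∃ F : {μ : X → ℝ // (∀ x, 0 ≤ μ x) ∧ ∑ x, μ x = 1} → L1Space,
    ∀ μ ν, tcNormX X (μ.1 - ν.1) ≤ ‖F μ - F ν‖ ∧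
      ‖F μ - F ν‖ ≤ C * tcNormX X (μ.1 - ν.1)} with hSE
  set ST := {C : ℝ | ∃ F : TCmod X → L1Space,
    ∀ μ ν : TCmod X, tcNormX X ((μ:X → ℝ) - (ν:X → ℝ)) ≤ ‖F μ - F ν‖ ∧
      ‖F μ - F ν‖ ≤ C * tcNormX X ((μ:X → ℝ) - (ν:X → ℝ))} with hST
  set SL := {C : ℝ | ∃ (m : ℕ) (F : TCmod X →ₗ[ℝ] PiLp 1 (fun _ : Fin m => ℝ)),
    ∀ μ ν : TCmod X, tcNormX X ((μ:X → ℝ) - (ν:X → ℝ)) ≤ ‖F μ - F ν‖ ∧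
      ‖F μ - F ν‖ ≤ C * tcNormX X ((μ:X → ℝ) - (ν:X → ℝ))} with hSL
  have e1 : c1EMD X = sInf SE := rfl
  have e2 : c1TC X = sInf ST := rfl
  have e3 : c1lin X = sInf SL := rfl
  have hLT : SL ⊆ ST := by
    rintro C ⟨m, F, hF⟩
    obtain ⟨J, hJ⟩ := l1_embed m
    refine ⟨fun v => J (F v), fun μ ν => ?_⟩
    rw [hJ]
    exact hF μ ν
  have hTE : ST ⊆ SE := by
    rintro C ⟨F, hF⟩
    refine ⟨fun μ => F ⟨fun x => μ.1 x - 1 / (Fintype.card X : ℝ), ?_⟩, fun μ ν => ?_⟩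
    · change ∑ x, (μ.1 x - 1 / (Fintype.card X : ℝ)) = 0
      rw [Finset.sum_sub_distrib, unif_sum, μ.2.2, sub_self]
    · have h := hF ⟨fun x => μ.1 x - 1 / (Fintype.card X : ℝ), by
          change ∑ x, (μ.1 x - 1 / (Fintype.card X : ℝ)) = 0
          rw [Finset.sum_sub_distrib, unif_sum, μ.2.2, sub_self]⟩
        ⟨fun x => ν.1 x - 1 / (Fintype.card X : ℝ), by
          change ∑ x, (ν.1 x - 1 / (Fintype.card X : ℝ)) = 0
          rw [Finset.sum_sub_distrib, unif_sum, ν.2.2, sub_self]⟩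
      have e : ((fun x => μ.1 x - 1 / (Fintype.card X : ℝ))
          - fun x => ν.1 x - 1 / (Fintype.card X : ℝ)) = μ.1 - ν.1 := by
        ext x
        simp
      simp only [e] at h
      exact h
  have hEL : ∀ C ∈ SE, ∀ ε > 0, C + ε ∈ SL := by
    rintro C ⟨F, hF⟩ ε hε
    exact main_step X C F hF ε hε
  have hbE : BddBelow SE := ⟨0, by
    rintro C ⟨F, hF⟩
    exact emd_nonneg X C F hF⟩
  have hbT : BddBelow ST := hbE.mono hTE
  have hbL : BddBelow SL := hbT.mono hLT
  rw [e1, e2, e3]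
  rcases SE.eq_empty_or_nonempty with hE | hE
  · have hT : ST = ∅ := Set.subset_eq_empty hTE hE
    have hL : SL = ∅ := Set.subset_eq_empty hLT hT
    rw [hE, hT, hL]
    exact ⟨rfl, rfl⟩
  obtain ⟨C0, hC0⟩ := id hE
  have hLne : SL.Nonempty := ⟨C0 + 1, hEL C0 hC0 1 one_pos⟩
  have i1 : sInf SE ≤ sInf ST := csInf_le_csInf hbE (hLne.mono hLT) hTE
  have i2 : sInf ST ≤ sInf SL := csInf_le_csInf hbT hLne hLT
  have i3 : sInf SL ≤ sInf SE := by
    apply le_csInf hE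
    intro C hC
    apply le_of_forall_pos_le_add
    intro ε hε
    exact csInf_le hbL (hEL C hC ε hε)
  exact ⟨le_antisymm i1 (i2.trans i3), le_antisymm i2 (i3.trans i1)⟩
end
end

section
/- Let n, d, k be integers with d ≥ 3 and 1 ≤ k ≤ n, and let A ⊆ [2^n]^d be nonempty. Then E[|μ_k(A)|] ≤ 2^k·Vol(A)·min{1, (p·2^{kd}·Vol(A))^{−1/2}}. -/
open MeasureTheory Finset

noncomputable section

/-- Points of the grid `[2^n]^d` (coordinates taken 0-based). -/
abbrev GridPt (n d : ℕ) := Fin d → Fin (2^n)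

/-- Normalized counting "volume" of a subset of the grid: `Vol(A) = 2^{-nd}|A|`. -/
def Vol (n d : ℕ) (A : Finset (GridPt n d)) : ℝ := (A.card : ℝ) / 2^(n*d)

/-- The ℓ1 metric on the grid. -/
def gdist {n d : ℕ} (u v : GridPt n d) : ℝ := ∑ i, |((u i : ℕ) : ℝ) - ((v i : ℕ) : ℝ)|

/-- Indices of the dyadic cubes in `D_k`. -/
abbrev CubeIdx (d k : ℕ) := Fin d → Fin (2^k)

/-- The dyadic cube of side-cardinality `2^(n-k)` indexed by `j ∈ {0,…,2^k-1}^d`. -/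
def cube (n d k : ℕ) (j : CubeIdx d k) : Finset (GridPt n d) :=
  Finset.univ.filter (fun x => ∀ i, (x i : ℕ) / 2^(n-k) = (j i : ℕ))

/-- `p = 2^{-4d}`. -/
def pp (d : ℕ) : ℝ := ((2:ℝ)^(4*d))⁻¹

/-- The law of each `X_Q`: takes values `±1` with probability `p/2` each
and `0` with probability `1-p`. -/
def stepMeasure (d : ℕ) : Measure ℝ :=
  (Real.toNNReal (pp d / 2)) • Measure.dirac (1:ℝ)
  + (Real.toNNReal (pp d / 2)) • Measure.dirac (-1:ℝ)
  + (Real.toNNReal (1 - pp d)) • Measure.dirac (0:ℝ)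

instance (d : ℕ) : IsFiniteMeasure (stepMeasure d) := by
  unfold stepMeasure; infer_instance

/-- The joint law of the i.i.d. family `{X_Q}_{Q ∈ D_k}`; a sample point
`ω : CubeIdx d k → ℝ` records the values `X_Q = ω Q`. -/
def prodMeasure (d k : ℕ) : Measure (CubeIdx d k → ℝ) :=
  Measure.pi fun _ => stepMeasure d

/-- `μ_k(A) = ∑_{Q ∈ D_k} p⁻¹ 2^k X_Q Vol(A ∩ Q)`, as a function of the sample point `ω`. -/
def muMeas (n d k : ℕ) (A : Finset (GridPt n d)) (ω : CubeIdx d k → ℝ) : ℝ :=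
  ∑ j : CubeIdx d k, (pp d)⁻¹ * 2^k * ω j * Vol n d (A ∩ cube n d k j)

lemma pp_pos (d : ℕ) : 0 < pp d := by unfold pp; positivity

lemma pp_le_one (d : ℕ) : pp d ≤ 1 := by
  unfold pp
  exact inv_le_one_of_one_le₀ (one_le_pow₀ (by norm_num))

lemma integrable_step (d : ℕ) (f : ℝ → ℝ) : Integrable f (stepMeasure d) := by
  unfold stepMeasure
  refine ((Integrable.smul_measure_nnreal ?_).add_measure
    (Integrable.smul_measure_nnreal ?_)).add_measure (Integrable.smul_measure_nnreal ?_) <;>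
  exact integrable_dirac (by simp)

lemma integral_step (d : ℕ) (f : ℝ → ℝ) :
    ∫ x, f x ∂(stepMeasure d) = pp d / 2 * f 1 + pp d / 2 * f (-1) + (1 - pp d) * f 0 := by
  have hd : ∀ a : ℝ, Integrable f (Measure.dirac a) := fun a => integrable_dirac (by simp)
  have h1 := pp_pos d
  have h2 := pp_le_one d
  unfold stepMeasure
  rw [integral_add_measure, integral_add_measure]
  · simp only [integral_smul_nnreal_measure, integral_dirac, NNReal.smul_def, smul_eq_mul]
    rw [Real.coe_toNNReal _ (by linarith), Real.coe_toNNReal _ (by linarith)]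
  all_goals first
    | exact (hd _).smul_measure_nnreal
    | exact ((hd _).smul_measure_nnreal).add_measure ((hd _).smul_measure_nnreal)

instance step_prob (d : ℕ) : IsProbabilityMeasure (stepMeasure d) := by
  have h := integral_step d (fun _ => 1)
  simp only [integral_const, smul_eq_mul, mul_one] at h
  constructor
  have h' : (stepMeasure d).real Set.univ = 1 := by rw [h]; ring
  rw [measureReal_def] at h'
  rw [← ENNReal.toReal_eq_one_iff, h']

instance prod_prob (d k : ℕ) : IsProbabilityMeasure (prodMeasure d k) := by
  unfold prodMeasure; infer_instance

lemma memLp_step (d : ℕ) (c : ℝ) : MemLp (fun x : ℝ => c * x) 2 (stepMeasure d) := by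
  rw [memLp_two_iff_integrable_sq (integrable_step d _).aestronglyMeasurable]
  exact integrable_step d _

lemma var_step (d : ℕ) (c : ℝ) :
    ProbabilityTheory.variance (fun x : ℝ => c * x) (stepMeasure d) = pp d * c ^ 2 := by
  rw [ProbabilityTheory.variance_eq_sub (memLp_step d c)]
  simp only [Pi.pow_apply]
  rw [integral_step, integral_step]
  ring

lemma first_bound (d k : ℕ) (c : CubeIdx d k → ℝ) (hc : ∀ j, 0 ≤ c j) :
    ∫ ω, |∑ j, c j * ω j| ∂(prodMeasure d k) ≤ pp d * ∑ j, c j := by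
  have hi : ∀ j : CubeIdx d k, ∀ f : ℝ → ℝ,
      Integrable (fun ω : CubeIdx d k → ℝ => f (ω j)) (prodMeasure d k) := fun j f =>
    integrable_comp_eval (μ := fun _ : CubeIdx d k => stepMeasure d) (integrable_step d f)
  calc ∫ ω, |∑ j, c j * ω j| ∂(prodMeasure d k)
      ≤ ∫ ω, ∑ j, |c j * ω j| ∂(prodMeasure d k) := by
        refine integral_mono ?_ ?_ (fun ω => Finset.abs_sum_le_sum_abs _ _)
        · exact (integrable_finsetSum _ (fun j _ => hi j (fun x => c j * x))).abs
        · exact integrable_finsetSum _ (fun j _ => hi j (fun x => |c j * x|))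
    _ = ∑ j, ∫ ω, |c j * ω j| ∂(prodMeasure d k) :=
        integral_finsetSum _ (fun j _ => hi j (fun x => |c j * x|))
    _ = ∑ j, pp d * c j := by
        refine Finset.sum_congr rfl fun j _ => ?_
        have := integral_comp_eval (μ := fun _ : CubeIdx d k => stepMeasure d) (i := j)
          (integrable_step d (fun x => |c j * x|)).aestronglyMeasurable
        unfold prodMeasure
        rw [this, integral_step]
        simp [abs_of_nonneg (hc j)]
        ring
    _ = pp d * ∑ j, c j := by rw [Finset.mul_sum]

lemma second_bound (d k : ℕ) (c : CubeIdx d k → ℝ) :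
    (∫ ω, |∑ j, c j * ω j| ∂(prodMeasure d k)) ^ 2 ≤ pp d * ∑ j, c j ^ 2 := by
  have hi : ∀ j : CubeIdx d k, ∀ f : ℝ → ℝ,
      Integrable (fun ω : CubeIdx d k → ℝ => f (ω j)) (prodMeasure d k) := fun j f =>
    integrable_comp_eval (μ := fun _ : CubeIdx d k => stepMeasure d) (integrable_step d f)
  have hv := ProbabilityTheory.variance_sum_pi (μ := fun _ : CubeIdx d k => stepMeasure d)
    (X := fun j x => c j * x) (fun j => memLp_step d (c j))
  have hf : (∑ j, fun ω : CubeIdx d k → ℝ => c j * ω j) = fun ω => ∑ j, c j * ω j := by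
    ext ω; simp
  rw [hf] at hv
  change ProbabilityTheory.variance _ (prodMeasure d k) = _ at hv
  simp only [var_step] at hv
  have hm : MemLp (fun ω : CubeIdx d k → ℝ => ∑ j, c j * ω j) 2 (prodMeasure d k) := by
    refine memLp_finsetSum _ (fun j _ => ?_)
    rw [memLp_two_iff_integrable_sq (hi j (fun x => c j * x)).aestronglyMeasurable]
    exact hi j (fun x => (c j * x) ^ 2)
  have h0 : ∫ ω, ∑ j, c j * ω j ∂(prodMeasure d k) = 0 := by
    rw [integral_finsetSum _ (fun j _ => hi j (fun x => c j * x))]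
    refine Finset.sum_eq_zero fun j _ => ?_
    have := integral_comp_eval (μ := fun _ : CubeIdx d k => stepMeasure d) (i := j)
      (integrable_step d (fun x => c j * x)).aestronglyMeasurable
    unfold prodMeasure
    rw [this, integral_step]
    ring
  rw [ProbabilityTheory.variance_eq_sub hm, h0] at hv
  have ha := ProbabilityTheory.variance_eq_sub hm.abs
  have hn := ProbabilityTheory.variance_nonneg
    (|fun ω : CubeIdx d k → ℝ => ∑ j, c j * ω j|) (prodMeasure d k)
  rw [ha] at hn
  simp only [Pi.pow_apply, Pi.abs_apply, sq_abs] at hn hv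
  rw [Finset.mul_sum]
  linarith

lemma card_cube_le (n d k : ℕ) (j : CubeIdx d k) : (cube n d k j).card ≤ (2 ^ (n - k)) ^ d := by
  have hp : 0 < 2 ^ (n - k) := by positivity
  have : (cube n d k j).card ≤ (Finset.univ : Finset (Fin d → Fin (2 ^ (n - k)))).card := by
    refine Finset.card_le_card_of_injOn
      (fun x i => ⟨(x i : ℕ) % 2 ^ (n - k), Nat.mod_lt _ hp⟩) (fun _ _ => by simp) ?_
    intro x hx y hy hxy
    simp only [cube, Finset.coe_filter, Finset.mem_univ, true_and, Set.mem_ofPred_eq] at hx hy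
    funext i
    have h1 := congrFun hxy i
    simp only [Fin.mk.injEq] at h1
    apply Fin.ext
    rw [← Nat.div_add_mod (x i : ℕ) (2 ^ (n - k)), ← Nat.div_add_mod (y i : ℕ) (2 ^ (n - k)),
      h1, hx i, hy i]
  simpa using this

lemma vol_nonneg (n d : ℕ) (A : Finset (GridPt n d)) : 0 ≤ Vol n d A := by
  unfold Vol; positivity

lemma vol_cube_le (n d k : ℕ) (hkn : k ≤ n) (A : Finset (GridPt n d)) (j : CubeIdx d k) :
    Vol n d (A ∩ cube n d k j) ≤ ((2 : ℝ) ^ (k * d))⁻¹ := by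
  have h : ((A ∩ cube n d k j).card : ℝ) ≤ (2 ^ (n - k)) ^ d := by
    exact_mod_cast (Finset.card_le_card Finset.inter_subset_right).trans (card_cube_le n d k j)
  unfold Vol
  rw [div_le_iff₀ (by positivity)]
  refine h.trans (le_of_eq ?_)
  rw [eq_inv_mul_iff_mul_eq₀ (by positivity), ← pow_mul, ← pow_add, ← add_mul]
  congr 2
  omega

lemma sum_vol (n d k : ℕ) (hkn : k ≤ n) (A : Finset (GridPt n d)) :
    ∑ j, Vol n d (A ∩ cube n d k j) = Vol n d A := by
  unfold Vol
  rw [← Finset.sum_div]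
  congr 1
  have hlt : ∀ a : Fin (2 ^ n), (a : ℕ) / 2 ^ (n - k) < 2 ^ k := fun a => by
    rw [Nat.div_lt_iff_lt_mul (by positivity), ← pow_add, Nat.add_sub_cancel' hkn]
    exact a.2
  let f : GridPt n d → CubeIdx d k := fun x i => ⟨(x i : ℕ) / 2 ^ (n - k), hlt (x i)⟩
  rw [Finset.card_eq_sum_card_fiberwise (f := f) (t := Finset.univ) (fun _ _ => by simp)]
  push_cast
  refine Finset.sum_congr rfl fun j _ => ?_
  congr 2
  ext x
  simp [cube, f, funext_iff, Fin.ext_iff]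

/-- `E[|μ_k(A)|] ≤ 2^k·Vol(A)·min{1, (p·2^{kd}·Vol(A))^{-1/2}}` for nonempty `A`. -/
theorem expected_mu_min_bound (n d k : ℕ) (hd : 3 ≤ d) (hk : 1 ≤ k) (hkn : k ≤ n)
    (A : Finset (GridPt n d)) (hA : A.Nonempty) :
    ∫ ω, |muMeas n d k A ω| ∂(prodMeasure d k)
      ≤ 2^k * Vol n d A * min 1 ((pp d * 2^(k*d) * Vol n d A) ^ (-(1/2) : ℝ)) := by
  set V := Vol n d A with hV
  have hVpos : 0 < V := by
    rw [hV]; unfold Vol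
    have : 0 < A.card := hA.card_pos
    positivity
  have hp := pp_pos d
  set c : CubeIdx d k → ℝ := fun j => (pp d)⁻¹ * 2 ^ k * Vol n d (A ∩ cube n d k j) with hc
  have hc0 : ∀ j, 0 ≤ c j := fun j => by
    have := vol_nonneg n d (A ∩ cube n d k j)
    simp only [hc]; positivity
  have hmu : ∀ ω, muMeas n d k A ω = ∑ j, c j * ω j := fun ω => by
    unfold muMeas
    refine Finset.sum_congr rfl fun j _ => ?_
    simp only [hc]; ring
  simp only [hmu]
  have h1 := first_bound d k c hc0
  have h2 := second_bound d k c
  have hs : ∑ j, c j = (pp d)⁻¹ * 2 ^ k * V := by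
    simp only [hc]
    rw [← Finset.mul_sum, sum_vol n d k hkn]
  have hs2 : ∑ j, c j ^ 2 ≤ ((pp d)⁻¹ * 2 ^ k) ^ 2 * (((2 : ℝ) ^ (k * d))⁻¹ * V) := by
    rw [hV, ← sum_vol n d k hkn, Finset.mul_sum, Finset.mul_sum]
    refine Finset.sum_le_sum fun j _ => ?_
    simp only [hc]
    rw [mul_pow, sq (Vol n d _)]
    have := vol_nonneg n d (A ∩ cube n d k j)
    have := vol_cube_le n d k hkn A j
    gcongr
  rw [mul_min_of_nonneg _ _ (by positivity)]
  refine le_min ?_ ?_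
  · rw [hs] at h1
    refine h1.trans (le_of_eq ?_)
    field_simp
  · have hW : 0 < pp d * 2 ^ (k * d) * V := by positivity
    refine (pow_le_pow_iff_left₀ (integral_nonneg fun _ => abs_nonneg _) (by positivity) two_ne_zero).1 ?_
    refine h2.trans ((mul_le_mul_of_nonneg_left hs2 hp.le).trans (le_of_eq ?_))
    have hr : ((pp d * 2 ^ (k * d) * V) ^ (-(1 / 2) : ℝ)) ^ 2 = (pp d * 2 ^ (k * d) * V)⁻¹ := by
      rw [← Real.rpow_natCast, ← Real.rpow_mul hW.le, ← Real.rpow_neg_one]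
      norm_num
    rw [mul_pow (2 ^ k * V), hr]
    field_simp
end
end

section
/- Let n, d, k be integers with d ≥ 3 and 1 ≤ k ≤ n. Then E[∫ f_{S_−(X)} dVol] ≥ (1/3)·d·2^{n−k}, where Vol is the normalized counting measure on [2^n]^d (so Vol([2^n]^d) = 1). -/
open MeasureTheory Finset

noncomputable section

/-- The function `f_S(z) = min{dist(z, ∪_{Q∈S} Q), d·2^n}`, with `f_∅ ≡ d·2^n`. -/
def fS (n d k : ℕ) (S : Finset (CubeIdx d k)) (z : GridPt n d) : ℝ :=
  if h : (S.biUnion (cube n d k)).Nonempty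
  then min ((S.biUnion (cube n d k)).inf' h (fun w => gdist z w)) ((d:ℝ) * 2^n)
  else (d:ℝ) * 2^n

/-- The random subset `S₋(X) = {Q ∈ D_k : X_Q = -1}`. -/
def Sminus (d k : ℕ) (ω : CubeIdx d k → ℝ) : Finset (CubeIdx d k) :=
  Finset.univ.filter (fun j => ω j = -1)

/-- `∫ f dVol`, where `Vol` is the normalized counting measure on the grid. -/
def intVol (n d : ℕ) (f : GridPt n d → ℝ) : ℝ := (∑ x, f x) / 2^(n*d)

/-- `∫ f dμ_k`, as a function of the sample point `ω`. -/
def intMu (n d k : ℕ) (f : GridPt n d → ℝ) (ω : CubeIdx d k → ℝ) : ℝ :=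
  ∑ x, f x * muMeas n d k {x} ω


/-- Gap (in units of the side length) between coordinates of two cubes. -/
def gapT (a b : ℕ) : ℕ := (a - b) + (b - a) - 1

lemma gap_sum_left (a N : ℕ) (h : N ≤ a) :
    ∑ b ∈ range N, (1/2:ℝ)^(gapT a b) ≤ 2 * (1/2:ℝ)^(a-N) := by
  induction N with
  | zero => simp
  | succ N ih =>
    rw [sum_range_succ]
    have h1 := ih (by omega)
    obtain ⟨c, rfl⟩ : ∃ c, a = N + 1 + c := ⟨a - (N+1), by omega⟩
    have e1 : gapT (N+1+c) N = c := by unfold gapT; omega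
    have e2 : N + 1 + c - N = c + 1 := by omega
    have e3 : N + 1 + c - (N+1) = c := by omega
    rw [e1, e3]
    rw [e2, pow_succ] at h1
    linarith

lemma gap_sum_right (a m : ℕ) :
    ∑ b ∈ range (a+1+m), (1/2:ℝ)^(gapT a b) ≤ 5 - 2 * (1/2:ℝ)^m := by
  induction m with
  | zero =>
    have h := gap_sum_left a a le_rfl
    have e : gapT a a = 0 := by unfold gapT; omega
    simp only [add_zero, sum_range_succ, e]
    simp only [Nat.sub_self, pow_zero] at h ⊢
    linarith
  | succ m ih =>
    rw [← add_assoc, sum_range_succ]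
    have e : gapT a (a+1+m) = m := by unfold gapT; omega
    rw [e, pow_succ]
    linarith

lemma gap_sum (a N : ℕ) : ∑ b ∈ range N, (1/2:ℝ)^(gapT a b) ≤ 5 := by
  rcases le_or_gt N a with h | h
  · have h1 := gap_sum_left a N h
    have : (1/2:ℝ)^(a-N) ≤ 1 := pow_le_one₀ (by norm_num) (by norm_num)
    linarith
  · obtain ⟨m, rfl⟩ : ∃ m, N = a + 1 + m := ⟨N - (a+1), by omega⟩
    have h1 := gap_sum_right a m
    have : 0 < (1/2:ℝ)^m := by positivity
    linarith

lemma gap_le (s x y : ℕ) (hs : 0 < s) :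
    (s:ℝ) * (gapT (x/s) (y/s) : ℝ) ≤ |(x:ℝ) - (y:ℝ)| := by
  wlog h : x ≤ y generalizing x y
  · have := this y x (by omega)
    rw [abs_sub_comm]
    have e : gapT (x/s) (y/s) = gapT (y/s) (x/s) := by unfold gapT; omega
    rwa [e]
  have h1 : x / s ≤ y / s := Nat.div_le_div_right h
  have hx := Nat.div_add_mod x s
  have hy := Nat.div_add_mod y s
  have hx' := Nat.mod_lt x hs
  have hy' := Nat.mod_lt y hs
  generalize x / s = a at *
  generalize y / s = b at *
  have hxy : (x:ℝ) ≤ y := by exact_mod_cast h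
  rw [abs_sub_comm, abs_of_nonneg (by linarith)]
  rcases h1.eq_or_lt with rfl | h2
  · have e : gapT a a = 0 := by unfold gapT; omega
    rw [e]; push_cast; linarith
  · obtain ⟨c, rfl⟩ : ∃ c, b = a + 1 + c := ⟨b - (a+1), by omega⟩
    have e : gapT a (a+1+c) = c := by unfold gapT; omega
    rw [e]
    have hm : s * (a + 1 + c) = s * a + s + s * c := by ring
    have : s * c + x ≤ y := by omega
    have : (s:ℝ) * c + x ≤ y := by exact_mod_cast this
    linarith

/-- The weight of a cube relative to a point. -/
def wgt (n d k : ℕ) (z : GridPt n d) (j : CubeIdx d k) : ℝ :=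
  ∏ i, (2 * (1/2:ℝ)^(gapT ((z i : ℕ) / 2^(n-k)) (j i : ℕ)))

lemma wgt_nonneg (n d k : ℕ) (z : GridPt n d) (j : CubeIdx d k) : 0 ≤ wgt n d k z j :=
  prod_nonneg fun _ _ => by positivity

lemma wgt_sum (n d k : ℕ) (z : GridPt n d) : ∑ j : CubeIdx d k, wgt n d k z j ≤ 10^d := by
  unfold wgt
  have h := (Finset.prod_univ_sum (fun _ : Fin d => (univ : Finset (Fin (2^k))))
    (fun i b => (2 * (1/2:ℝ)^(gapT ((z i : ℕ) / 2^(n-k)) (b : ℕ)))))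
  rw [Fintype.piFinset_univ] at h
  rw [← h]
  calc _ ≤ ∏ _i : Fin d, (10:ℝ) := by
        apply prod_le_prod
        · intro i _; exact sum_nonneg fun _ _ => by positivity
        · intro i _
          rw [← mul_sum, Fin.sum_univ_eq_sum_range
            (fun b => (1/2:ℝ)^(gapT ((z i : ℕ) / 2^(n-k)) b))]
          have := gap_sum ((z i : ℕ) / 2^(n-k)) (2^k)
          linarith
    _ = 10^d := by simp

lemma fS_lower (n d k : ℕ) (S : Finset (CubeIdx d k)) (z : GridPt n d) :
    (d:ℝ) * 2^(n-k) * (1 - ∑ j, if j ∈ S then wgt n d k z j else 0) ≤ fS n d k S z := by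
  have hsum : 0 ≤ ∑ j, if j ∈ S then wgt n d k z j else 0 :=
    sum_nonneg fun j _ => by split_ifs; exacts [wgt_nonneg .., le_rfl]
  have hcap : (d:ℝ) * 2^(n-k) * (1 - ∑ j, if j ∈ S then wgt n d k z j else 0) ≤ (d:ℝ) * 2^n := by
    have h1 : (2:ℝ)^(n-k) ≤ 2^n := pow_le_pow_right₀ (by norm_num) (by omega)
    calc _ ≤ (d:ℝ) * 2^(n-k) * 1 := by gcongr; linarith
      _ ≤ _ := by rw [mul_one]; gcongr
  unfold fS
  split_ifs with h
  · refine le_min ?_ hcap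
    refine le_inf' _ _ ?_
    intro w hw
    obtain ⟨j, hj, hwj⟩ := mem_biUnion.1 hw
    simp only [cube, mem_filter, mem_univ, true_and] at hwj
    set T : ℕ := ∑ i, gapT ((z i : ℕ) / 2^(n-k)) (j i : ℕ) with hT
    have hd1 : (2:ℝ)^(n-k) * T ≤ gdist z w := by
      unfold gdist
      rw [hT]; push_cast; rw [mul_sum]
      apply sum_le_sum
      intro i _
      have := gap_le (2^(n-k)) (z i) (w i) (by positivity)
      rw [hwj i] at this
      exact_mod_cast this
    have hw1 : wgt n d k z j ≤ ∑ j, if j ∈ S then wgt n d k z j else 0 := by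
      have := single_le_sum (f := fun j => if j ∈ S then wgt n d k z j else 0)
        (fun j _ => by split_ifs; exacts [wgt_nonneg .., le_rfl]) (mem_univ j)
      simpa [hj] using this
    have hw2 : wgt n d k z j = 2^d * (1/2:ℝ)^T := by
      unfold wgt
      rw [prod_mul_distrib, prod_pow_eq_pow_sum]; simp [hT]
    refine le_trans ?_ hd1
    rcases le_or_gt d T with hc | hc
    · have : (d:ℝ) ≤ T := by exact_mod_cast hc
      calc _ ≤ (d:ℝ) * 2^(n-k) * 1 := by gcongr; linarith
        _ = 2^(n-k) * (d:ℝ) := by ring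
        _ ≤ _ := by gcongr
    · have h1 : 1 ≤ wgt n d k z j := by
        rw [hw2]
        calc (1:ℝ) = 2^T * (1/2:ℝ)^T := by rw [← mul_pow]; norm_num
          _ ≤ 2^d * (1/2:ℝ)^T := by
            gcongr
            norm_num
      calc _ ≤ (0:ℝ) := mul_nonpos_of_nonneg_of_nonpos (by positivity) (by linarith)
        _ ≤ _ := by positivity
  · exact hcap

instance stepMeasure_prob (d : ℕ) : IsProbabilityMeasure (stepMeasure d) := by
  constructor
  have h1 := pp_pos d
  have h2 := pp_le_one d
  simp only [stepMeasure, Measure.add_apply, Measure.smul_apply, measure_univ,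
    ENNReal.smul_def, smul_eq_mul, mul_one]
  rw [← ENNReal.coe_add, ← ENNReal.coe_add, ← Real.toNNReal_add (by linarith) (by linarith),
    ← Real.toNNReal_add (by linarith) (by linarith)]
  ring_nf
  simp

lemma stepMeasure_neg (d : ℕ) : (stepMeasure d).real {-1} = pp d / 2 := by
  have h1 := pp_pos d
  have h3 : (1:ℝ) ≠ -1 := by norm_num
  have h4 : (0:ℝ) ≠ -1 := by norm_num
  have e : stepMeasure d {-1} = ((Real.toNNReal (pp d / 2) : NNReal) : ENNReal) := by
    simp only [stepMeasure, Measure.add_apply, Measure.smul_apply,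
      Measure.dirac_apply, ENNReal.smul_def, smul_eq_mul]
    simp [Set.indicator, h3, h4]
  rw [Measure.real, e, ENNReal.coe_toReal, Real.coe_toNNReal _ (by linarith)]

instance prodMeasure_prob (d k : ℕ) : IsProbabilityMeasure (prodMeasure d k) := by
  unfold prodMeasure; infer_instance

lemma meas_set (d k : ℕ) (j : CubeIdx d k) : MeasurableSet {ω : CubeIdx d k → ℝ | ω j = -1} :=
  (measurableSet_singleton (-1:ℝ)).preimage (measurable_pi_apply j)

lemma prod_neg (d k : ℕ) (j : CubeIdx d k) :
    (prodMeasure d k).real {ω | ω j = -1} = pp d / 2 := by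
  rw [← stepMeasure_neg]
  have h := (measurePreserving_eval (fun _ : CubeIdx d k => stepMeasure d) j).measureReal_preimage
    (measurableSet_singleton (-1:ℝ)).nullMeasurableSet
  exact h

lemma integrable_Sminus (d k : ℕ) (g : Finset (CubeIdx d k) → ℝ) :
    Integrable (fun ω => g (Sminus d k ω)) (prodMeasure d k) := by
  letI : MeasurableSpace (Finset (CubeIdx d k)) := ⊤
  have hm : Measurable (Sminus d k) := by
    apply measurable_to_countable'
    intro S
    have : Sminus d k ⁻¹' {S} = ⋂ j, {ω | ω j = -1 ↔ j ∈ S} := by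
      ext ω
      simp [Sminus, Finset.ext_iff]
    rw [this]
    refine MeasurableSet.iInter fun j => ?_
    by_cases hj : j ∈ S
    · simpa [hj] using meas_set d k j
    · simp only [hj, iff_false]
      exact (meas_set d k j).compl
  have hg : Measurable g := measurable_from_top
  refine Integrable.of_bound (hg.comp hm).aestronglyMeasurable (∑ S, |g S|) ?_
  refine Filter.Eventually.of_forall fun ω => ?_
  exact single_le_sum (f := fun S => |g S|) (fun _ _ => abs_nonneg _) (mem_univ (Sminus d k ω))

lemma expected_point (n d k : ℕ) (z : GridPt n d) :
    (1/2) * (d:ℝ) * 2^(n-k) ≤ ∫ ω, fS n d k (Sminus d k ω) z ∂(prodMeasure d k) := by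
  have hmono : ∫ ω, (d:ℝ) * 2^(n-k) *
      (1 - ∑ j, if j ∈ Sminus d k ω then wgt n d k z j else 0) ∂(prodMeasure d k) ≤
      ∫ ω, fS n d k (Sminus d k ω) z ∂(prodMeasure d k) :=
    integral_mono (integrable_Sminus d k fun S => (d:ℝ) * 2^(n-k) *
      (1 - ∑ j, if j ∈ S then wgt n d k z j else 0))
      (integrable_Sminus d k fun S => fS n d k S z) fun ω => fS_lower n d k _ z
  refine le_trans ?_ hmono
  have hj : ∀ j, ∫ ω, (if j ∈ Sminus d k ω then wgt n d k z j else 0) ∂(prodMeasure d k)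
      = pp d / 2 * wgt n d k z j := by
    intro j
    have : (fun ω => if j ∈ Sminus d k ω then wgt n d k z j else 0) =
        Set.indicator {ω | ω j = -1} (fun _ => wgt n d k z j) := by
      ext ω
      simp [Set.indicator, Sminus]
    rw [this, integral_indicator_const _ (meas_set d k j), prod_neg, smul_eq_mul]
  rw [integral_const_mul, integral_sub (integrable_const _)
    (integrable_Sminus d k fun S => ∑ j, if j ∈ S then wgt n d k z j else 0),
    integral_finsetSum _ (fun j _ => integrable_Sminus d k fun S =>
      if j ∈ S then wgt n d k z j else 0)]
  simp only [hj, ← mul_sum]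
  have hw := wgt_sum n d k z
  have h1 : pp d * 10^d ≤ 1 := by
    unfold pp
    rw [pow_mul, ← inv_pow, ← mul_pow]
    exact pow_le_one₀ (by norm_num) (by norm_num)
  have h2 : pp d * ∑ j, wgt n d k z j ≤ pp d * 10^d :=
    mul_le_mul_of_nonneg_left hw (pp_pos d).le
  have h3 : (1/2:ℝ) ≤ 1 - pp d / 2 * ∑ j, wgt n d k z j := by linarith
  simp only [integral_const, probReal_univ, smul_eq_mul, mul_one]
  calc (1/2) * (d:ℝ) * 2^(n-k) = (d:ℝ) * 2^(n-k) * (1/2) := by ring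
    _ ≤ _ := by gcongr

/-- `E[∫ f_{S₋(X)} dVol] ≥ (1/3)·d·2^{n-k}`. -/
theorem expected_intVol_ge (n d k : ℕ) (hd : 3 ≤ d) (hk : 1 ≤ k) (hkn : k ≤ n) :
    ∫ ω, intVol n d (fS n d k (Sminus d k ω)) ∂(prodMeasure d k)
      ≥ (1/3) * (d:ℝ) * 2^(n-k) := by
  unfold intVol
  rw [integral_div, integral_finsetSum _ (fun z _ => integrable_Sminus d k fun S => fS n d k S z)]
  have h : ∑ _z : GridPt n d, (1/2) * (d:ℝ) * 2^(n-k) ≤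
      ∑ z : GridPt n d, ∫ ω, fS n d k (Sminus d k ω) z ∂(prodMeasure d k) :=
    sum_le_sum fun z _ => expected_point n d k z
  rw [ge_iff_le, le_div_iff₀ (by positivity)]
  refine le_trans ?_ h
  simp only [sum_const, card_univ, Fintype.card_fun, Fintype.card_fin, nsmul_eq_mul]
  push_cast
  rw [← pow_mul, mul_comm]
  gcongr
  norm_num
end
end
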